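/- Let μ be a probability measure on ℝ^d, let k(z, z') = ∫ cos(⟨v, z − z'⟩) dμ(v), let W be a measurable space with probability measure p, let g : W × X → ℝ^d be measurable, and fix inputs x₁,…,xₙ ∈ X. Let K_{ij} = ∫∫ k(g(w,x_i), g(w',x_j)) dp(w) dp(w'). Let ((v₁,b₁),…,(v_q,b_q)) be i.i.d. with v_l ∼ μ and b_l ∼ Unif[0, 2π], and define the n×q random matrix R with entries R_{il} = ∫ √(2/q) cos(⟨v_l, g(w,x_i)⟩ + b_l) dp(w). Then for each i, j, the expectation over the samples (v₁,b₁),…,(v_q,b_q) of the (i,j) entry of R Rᵀ equals K_{ij}, i.e., E[(R Rᵀ)_{ij}] = K_{ij}. (This is the unbiasedness of the Random Fourier Features linear-kernel approximation K ≃ R Rᵀ of Proposition 2.) -/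

import Mathlib

open scoped InnerProductSpace
open MeasureTheory Real Matrix

/-!
By the product-to-sum formula, `2 cos (a + b) cos (a' + b)` is `cos (a - a')` plus a term of
frequency `2` in `b`, and a uniform phase averages that term to zero because its characteristic
function vanishes at `2`. With the normalization `√(2/q)`, the product of two features at the same
sample therefore has mean `k / q`. Fubini carries this through the averages over `w` and `w'`, and
an entry of `R Rᵀ` is a sum of `q` such products, each involving a single sample.
-/

section Phase

/-- The uniform distribution on `[0, 2π]`, the law of the phases `b_l`, as normalized Lebesgue
measure. -/
noncomputable def uniformPhase : Measure ℝ :=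
  (ENNReal.ofReal (2 * π))⁻¹ • volume.restrict (Set.Icc 0 (2 * π))

instance isProbabilityMeasure_uniformPhase : IsProbabilityMeasure uniformPhase where
  measure_univ := by
    rw [uniformPhase, Measure.smul_apply, Measure.restrict_apply_univ, volume_Icc, sub_zero,
      smul_eq_mul]
    exact ENNReal.inv_mul_cancel (ENNReal.ofReal_pos.2 two_pi_pos).ne' ENNReal.ofReal_ne_top

lemma charFun_uniformPhase_intCast {m : ℤ} (hm : m ≠ 0) : charFun uniformPhase m = 0 := by
  have hc : (m : ℂ) * Complex.I ≠ 0 := mul_ne_zero (mod_cast hm) Complex.I_ne_zero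
  have hperiod : Complex.exp ((m : ℂ) * Complex.I * (2 * π : ℝ)) = 1 := by
    rw [← Complex.exp_int_mul_two_pi_mul_I m]
    push_cast
    ring_nf
  have hinterval : ∫ b in (0 : ℝ)..(2 * π), Complex.exp ((m : ℂ) * Complex.I * b) = 0 := by
    rw [integral_exp_mul_complex hc, hperiod, Complex.ofReal_zero, mul_zero, Complex.exp_zero,
      sub_self, zero_div]
  rw [charFun_apply_real, uniformPhase, integral_smul_measure,
    integral_Icc_eq_integral_Ioc, ← intervalIntegral.integral_of_le two_pi_pos.le]
  simp_rw [Complex.ofReal_intCast, mul_right_comm _ _ Complex.I]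
  rw [hinterval, smul_zero]

lemma integral_cos_mul_add (ν : Measure ℝ) [IsFiniteMeasure ν] (t c : ℝ) :
    ∫ b, cos (t * b + c) ∂ν = (charFun ν t * Complex.exp (c * Complex.I)).re := by
  have hint : Integrable (fun b : ℝ => Complex.exp ((t * b + c : ℝ) * Complex.I)) ν :=
    .of_bound (by fun_prop) 1 (.of_forall fun b => (Complex.norm_exp_ofReal_mul_I _).le)
  simp_rw [← Complex.exp_ofReal_mul_I_re]
  refine (integral_re hint).trans ?_
  rw [charFun_apply_real, ← integral_mul_const]
  simp_rw [← Complex.exp_add, ← add_mul]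
  push_cast
  rfl

lemma integral_cos_add_mul_cos_add {ν : Measure ℝ} [IsProbabilityMeasure ν]
    (hν : charFun ν 2 = 0) (a a' : ℝ) :
    ∫ b, cos (a + b) * cos (a' + b) ∂ν = cos (a - a') / 2 := by
  have hprod (b : ℝ) :
      cos (a + b) * cos (a' + b) = cos (a - a') / 2 + cos (2 * b + (a + a')) / 2 := by
    rw [← add_div, eq_div_iff two_ne_zero, mul_comm, ← mul_assoc, two_mul_cos_mul_cos]
    ring_nf
  have hint : Integrable (fun b => cos (2 * b + (a + a')) / 2) ν :=
    .div_const (.of_bound (by fun_prop) 1 (.of_forall fun b => abs_cos_le_one _)) 2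
  simp_rw [hprod]
  rw [integral_add (integrable_const _) hint, integral_const, integral_div,
    integral_cos_mul_add, hν, probReal_univ, one_smul, zero_mul, Complex.zero_re, zero_div,
    add_zero]

end Phase

section RandomFourierFeatures

variable {E : Type*} [NormedAddCommGroup E] [InnerProductSpace ℝ E] {W ι : Type*}
  [MeasurableSpace W]

/-- The random Fourier feature `f_{v,b}(z) = √(2/q) cos(⟪v, z⟫ + b)` in an approximation by `q`
samples; the frequency and the phase are packed into one sample `t = (v, b)`. -/
noncomputable def fourierFeature (q : ℕ) (t : E × ℝ) (z : E) : ℝ :=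
  √(2 / q) * cos (⟪t.1, z⟫_ℝ + t.2)

/-- The matrix `R` with entries `E_w[f_{v_l,b_l}(φ i w)]` for samples `s l = (v_l, b_l)`; `φ i` is
the random function evaluated at the `i`-th input. -/
noncomputable def fourierFeatureMatrix {q : ℕ} (p : Measure W) (φ : ι → W → E)
    (s : Fin q → E × ℝ) : Matrix ι (Fin q) ℝ :=
  .of fun i l => ∫ w, fourierFeature q (s l) (φ i w) ∂p

lemma fourierFeature_mul (q : ℕ) (t : E × ℝ) (z z' : E) :
    fourierFeature q t z * fourierFeature q t z'
      = 2 / q * (cos (⟪t.1, z⟫_ℝ + t.2) * cos (⟪t.1, z'⟫_ℝ + t.2)) := by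
  rw [fourierFeature, fourierFeature, mul_mul_mul_comm, mul_self_sqrt (by positivity)]

lemma abs_fourierFeature_mul_le (q : ℕ) (t : E × ℝ) (z z' : E) :
    |fourierFeature q t z * fourierFeature q t z'| ≤ 2 / q := by
  rw [fourierFeature_mul, abs_mul, abs_mul, abs_of_nonneg (by positivity)]
  exact mul_le_of_le_one_right (by positivity)
    (mul_le_one₀ (abs_cos_le_one _) (abs_nonneg _) (abs_cos_le_one _))

variable [MeasurableSpace E]

/-- The shift-invariant kernel with Bochner representation
`k(z, z') = ∫ cos ⟪v, z - z'⟫ dμ(v)`. -/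
noncomputable def bochnerKernel (μ : Measure E) (z z' : E) : ℝ :=
  ∫ v, cos ⟪v, z - z'⟫_ℝ ∂μ

variable [BorelSpace E] [SecondCountableTopology E]

lemma aemeasurable_fourierFeature {Ω : Type*} [MeasurableSpace Ω] {P : Measure Ω} (q : ℕ)
    {T : Ω → E × ℝ} {Z : Ω → E} (hT : AEMeasurable T P) (hZ : AEMeasurable Z P) :
    AEMeasurable (fun ω => fourierFeature q (T ω) (Z ω)) P :=
  ((hT.fst.inner hZ).add hT.snd).cos.const_mul _

variable {μ : Measure E} [IsFiniteMeasure μ]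
  {ν : Measure ℝ} [IsProbabilityMeasure ν] {p : Measure W} [IsFiniteMeasure p]

lemma integral_fourierFeature_mul (hν : charFun ν 2 = 0) (q : ℕ) (z z' : E) :
    ∫ t, fourierFeature q t z * fourierFeature q t z' ∂(μ.prod ν) = bochnerKernel μ z z' / q := by
  have hmeas : AEMeasurable (fun t => fourierFeature q t z * fourierFeature q t z') (μ.prod ν) :=
    (aemeasurable_fourierFeature q aemeasurable_id aemeasurable_const).mul
      (aemeasurable_fourierFeature q aemeasurable_id aemeasurable_const)
  have hint : Integrable (fun t => fourierFeature q t z * fourierFeature q t z') (μ.prod ν) :=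
    .of_bound hmeas.aestronglyMeasurable (2 / q)
      (.of_forall fun t => abs_fourierFeature_mul_le q t z z')
  have hphase (v : E) : ∫ b, fourierFeature q (v, b) z * fourierFeature q (v, b) z' ∂ν
      = cos ⟪v, z - z'⟫_ℝ / q := by
    simp_rw [fourierFeature_mul]
    rw [integral_const_mul, integral_cos_add_mul_cos_add hν, inner_sub_right]
    ring
  rw [integral_prod _ hint]
  simp_rw [hphase]
  rw [integral_div, bochnerKernel]

lemma integrable_fourierFeature_mul (ρ : Measure (E × ℝ)) [IsFiniteMeasure ρ] (q : ℕ)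
    {φ ψ : W → E} (hφ : AEMeasurable φ p) (hψ : AEMeasurable ψ p) :
    Integrable (fun y : (E × ℝ) × W × W =>
      fourierFeature q y.1 (φ y.2.1) * fourierFeature q y.1 (ψ y.2.2)) (ρ.prod (p.prod p)) :=
  have hmeas :=
    (aemeasurable_fourierFeature q measurable_fst.aemeasurable hφ.comp_fst.comp_snd).mul
      (aemeasurable_fourierFeature q measurable_fst.aemeasurable hψ.comp_snd.comp_snd)
  .of_bound hmeas.aestronglyMeasurable (2 / q)
    (.of_forall fun y => abs_fourierFeature_mul_le q y.1 _ _)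

lemma integrable_mean_fourierFeature_mul_mean (ρ : Measure (E × ℝ)) [IsFiniteMeasure ρ] (q : ℕ)
    {φ ψ : W → E} (hφ : AEMeasurable φ p) (hψ : AEMeasurable ψ p) :
    Integrable (fun t => (∫ w, fourierFeature q t (φ w) ∂p) * ∫ w, fourierFeature q t (ψ w) ∂p)
      ρ := by
  simp_rw [← integral_prod_mul]
  exact (integrable_fourierFeature_mul ρ q hφ hψ).integral_prod_left

lemma integral_mean_fourierFeature_mul_mean (hν : charFun ν 2 = 0) (q : ℕ)
    {φ ψ : W → E} (hφ : AEMeasurable φ p) (hψ : AEMeasurable ψ p) :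
    ∫ t, (∫ w, fourierFeature q t (φ w) ∂p) * (∫ w, fourierFeature q t (ψ w) ∂p) ∂(μ.prod ν)
      = (∫ w, ∫ w', bochnerKernel μ (φ w) (ψ w') ∂p ∂p) / q := by
  have hint := integrable_fourierFeature_mul (μ.prod ν) q hφ hψ
  have hker : Integrable (fun y : W × W => bochnerKernel μ (φ y.1) (ψ y.2) / q) (p.prod p) := by
    simpa only [integral_fourierFeature_mul hν] using hint.integral_prod_right
  simp_rw [← integral_prod_mul]
  rw [integral_integral_swap hint]
  simp_rw [integral_fourierFeature_mul hν]
  rw [integral_prod _ hker]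
  simp_rw [integral_div]

theorem rff_linear_kernel_unbiased_general (hν : charFun ν 2 = 0) {φ : ι → W → E}
    (hφ : ∀ i, AEMeasurable (φ i) p) {q : ℕ} (hq : q ≠ 0) {Ω : Type*} [MeasurableSpace Ω]
    {P : Measure Ω} {S : Fin q → Ω → E × ℝ}
    (hS : ∀ l, ProbabilityTheory.HasLaw (S l) (μ.prod ν) P) (i j : ι) :
    ∫ ω, (fourierFeatureMatrix p φ (S · ω) * (fourierFeatureMatrix p φ (S · ω))ᵀ) i j ∂P
      = ∫ w, ∫ w', bochnerKernel μ (φ i w) (φ j w') ∂p ∂p := by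
  let F (t : E × ℝ) : ℝ := (∫ w, fourierFeature q t (φ i w) ∂p) * ∫ w, fourierFeature q t (φ j w) ∂p
  have hF (l : Fin q) : Integrable F (P.map (S l)) := by
    rw [(hS l).map_eq]
    exact integrable_mean_fourierFeature_mul_mean _ q (hφ i) (hφ j)
  calc ∫ ω, (fourierFeatureMatrix p φ (S · ω) * (fourierFeatureMatrix p φ (S · ω))ᵀ) i j ∂P
      = ∫ ω, ∑ l, F (S l ω) ∂P := rfl
    _ = ∑ l, ∫ ω, F (S l ω) ∂P :=
        integral_finsetSum _ fun l _ => (hF l).comp_aemeasurable (hS l).aemeasurable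
    _ = ∑ _l : Fin q, ∫ t, F t ∂(μ.prod ν) := Finset.sum_congr rfl fun l _ =>
        (hS l).integral_comp (f := F) ((hS l).map_eq ▸ (hF l).aestronglyMeasurable)
    _ = q * ((∫ w, ∫ w', bochnerKernel μ (φ i w) (φ j w') ∂p ∂p) / q) := by
        rw [integral_mean_fourierFeature_mul_mean hν q (hφ i) (hφ j), Finset.sum_const,
          Finset.card_univ, Fintype.card_fin, nsmul_eq_mul]
    _ = ∫ w, ∫ w', bochnerKernel μ (φ i w) (φ j w') ∂p ∂p :=
        mul_div_cancel₀ _ (Nat.cast_ne_zero.mpr hq)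

end RandomFourierFeatures

/-- Unbiasedness of the Random Fourier Features approximation `K ≃ R Rᵀ` of
Proposition 2: if `K i j = ∫∫ k(g(w, xᵢ), g(w', xⱼ)) dp(w) dp(w')` for a
shift-invariant kernel `k(z,z') = ∫ cos ⟪v, z - z'⟫ dμ(v)`, and the random matrix
`R` built from `q` i.i.d. samples `(vₗ, bₗ) ∼ μ × Unif[0, 2π]` has entries
`R i l = ∫ √(2/q) cos(⟪vₗ, g(w, xᵢ)⟫ + bₗ) dp(w)`, then `E[(R Rᵀ) i j] = K i j`. -/
theorem rff_linear_kernel_unbiased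
    {d : ℕ} (μ : Measure (EuclideanSpace ℝ (Fin d))) [IsProbabilityMeasure μ]
    (k : EuclideanSpace ℝ (Fin d) → EuclideanSpace ℝ (Fin d) → ℝ)
    (hk : ∀ z z', k z z' = ∫ v, cos ⟪v, z - z'⟫_ℝ ∂μ)
    {W X : Type*} [MeasurableSpace W] [MeasurableSpace X]
    (p : Measure W) [IsProbabilityMeasure p]
    (g : W × X → EuclideanSpace ℝ (Fin d)) (hg : Measurable g)
    {n : ℕ} (x : Fin n → X)
    (K : Matrix (Fin n) (Fin n) ℝ)
    (hK : ∀ i j, K i j = ∫ w, ∫ w', k (g (w, x i)) (g (w', x j)) ∂p ∂p)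
    {q : ℕ} (hq : 0 < q)
    -- `unif` is the uniform probability distribution on `[0, 2π]`
    (unif : Measure ℝ)
    (hunif : unif = (ENNReal.ofReal (2 * π))⁻¹ • volume.restrict (Set.Icc 0 (2 * π)))
    (R : (Fin q → EuclideanSpace ℝ (Fin d) × ℝ) → Matrix (Fin n) (Fin q) ℝ)
    (hR : ∀ s i l, R s i l
      = ∫ w, Real.sqrt (2 / q) * cos (⟪(s l).1, g (w, x i)⟫_ℝ + (s l).2) ∂p) :
    ∀ i j, (∫ s, (R s * (R s)ᵀ) i j ∂(Measure.pi fun _ : Fin q => μ.prod unif))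
      = K i j := by
  obtain rfl : unif = uniformPhase := hunif
  obtain rfl : R = fourierFeatureMatrix p fun i w => g (w, x i) := by ext; exact hR ..
  simp_rw [hK, hk]
  exact rff_linear_kernel_unbiased_general (mod_cast charFun_uniformPhase_intCast two_ne_zero)
    (fun i => (hg.comp measurable_prodMk_right).aemeasurable) hq.ne'
    fun l => (measurePreserving_eval (fun _ => μ.prod uniformPhase) l).hasLaw
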